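/- For R ∈ ⟨Ric₀⟩ and S, W ∈ ⟨W⟩ in S²_B(⋀²ℝⁿ), one has tri(R, S, W) = 0 = tri(S, R, 𝐈) (where 𝐈 = id ∧ id), and Q(S, R) ∈ ⟨Ric₀⟩. -/

import Mathlib

open scoped BigOperators
open Matrix Filter

noncomputable section

/-- `so n`: the Lie algebra of real skew-symmetric `n × n` matrices, as a submodule of
matrices.  It is the model for `⋀²ℝⁿ` under the identification `x ∧ y ↦ x yᵀ - y xᵀ`,
i.e. `(x ∧ y)(z) = ⟨y,z⟩x - ⟨x,z⟩y`. -/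
def so (n : ℕ) : Submodule ℝ (Matrix (Fin n) (Fin n) ℝ) where
  carrier := {A | Aᵀ = -A}
  add_mem' := fun {a b} ha hb => by
    simp only [Set.mem_setOf_eq] at *
    rw [Matrix.transpose_add, ha, hb, neg_add]
  zero_mem' := by simp
  smul_mem' := fun c {a} ha => by
    simp only [Set.mem_setOf_eq] at *
    rw [Matrix.transpose_smul, ha, smul_neg]

lemma mem_so {n : ℕ} {A : Matrix (Fin n) (Fin n) ℝ} : A ∈ so n ↔ Aᵀ = -A := Iff.rfl

lemma so_skew {n : ℕ} (X : so n) : (X.1)ᵀ = -X.1 := mem_so.mp X.2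

lemma so_skew' {n : ℕ} (X : so n) (i j : Fin n) : X.1 j i = -X.1 i j := by
  have h := congrFun (congrFun (so_skew X) i) j
  simpa [Matrix.transpose_apply] using h

/-- The Lie bracket (matrix commutator) on `so n`. -/
def brkt {n : ℕ} (X Y : so n) : so n :=
  ⟨X.1 * Y.1 - Y.1 * X.1, by
    rw [mem_so, Matrix.transpose_sub, Matrix.transpose_mul, Matrix.transpose_mul,
      so_skew X, so_skew Y]
    simp [neg_sub]⟩

/-- The inner product `⟨A, B⟩ = -(1/2) tr (A B)` on `so n ≅ ⋀²ℝⁿ`, for which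
`{e_i ∧ e_j : i < j}` is orthonormal. -/
def ip {n : ℕ} (X Y : so n) : ℝ := -(1 / 2) * (X.1 * Y.1).trace

/-- `ip X` as a linear functional. -/
def ipL {n : ℕ} (X : so n) : so n →ₗ[ℝ] ℝ where
  toFun Y := ip X Y
  map_add' Y Z := by
    simp [ip, Matrix.mul_add, Matrix.trace_add]
    ring
  map_smul' c Y := by
    simp [ip, Matrix.mul_smul, Matrix.trace_smul]
    ring

/-- The wedge `x ∧ y` of two vectors, as an element of `so n`. -/
def wedgeVec {n : ℕ} (x y : Fin n → ℝ) : so n :=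
  ⟨Matrix.of fun i j => x i * y j - y i * x j, by
    rw [mem_so]
    ext i j
    simp [Matrix.transpose_apply]
    ring⟩

/-- Index set for the standard orthonormal basis `{e_i ∧ e_j : i < j}` of `so n`. -/
def pairs (n : ℕ) : Finset (Fin n × Fin n) := Finset.univ.filter (fun p => p.1 < p.2)

/-- Standard basis vector of `ℝⁿ`. -/
def stdVec {n : ℕ} (i : Fin n) : Fin n → ℝ := Pi.single i 1

/-- The standard orthonormal basis element `e_i ∧ e_j` of `so n`. -/
def omegaB {n : ℕ} (p : Fin n × Fin n) : so n := wedgeVec (stdVec p.1) (stdVec p.2)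

/-- Hamilton's sharp product `A # B` of self-adjoint endomorphisms of `⋀²ℝⁿ ≅ so n`:
`⟨(A # B)(φ), ψ⟩ = (1/2) Σ_{α,β} ⟨[A ω_α, B ω_β], φ⟩ ⟨[ω_α, ω_β], ψ⟩`
over the orthonormal basis `{ω_α} = {e_i ∧ e_j : i < j}`. -/
def sharp {n : ℕ} (A B : Module.End ℝ (so n)) : Module.End ℝ (so n) :=
  (1 / 2 : ℝ) • ∑ p ∈ pairs n, ∑ q ∈ pairs n,
    (ipL (brkt (A (omegaB p)) (B (omegaB q)))).smulRight (brkt (omegaB p) (omegaB q))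

/-- The bilinear map `Q(A,B) = (1/2)(AB + BA) + A # B`. -/
def Qbil {n : ℕ} (A B : Module.End ℝ (so n)) : Module.End ℝ (so n) :=
  (1 / 2 : ℝ) • (A * B + B * A) + sharp A B

/-- `Q(R) = R² + R # R`. -/
def Qop {n : ℕ} (R : Module.End ℝ (so n)) : Module.End ℝ (so n) := R * R + sharp R R

/-- Self-adjointness of an endomorphism of `so n ≅ ⋀²ℝⁿ`. -/
def IsSelfAdjointCO {n : ℕ} (R : Module.End ℝ (so n)) : Prop :=
  ∀ X Y : so n, ip (R X) Y = ip X (R Y)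

/-- The first Bianchi identity. -/
def SatBianchi {n : ℕ} (R : Module.End ℝ (so n)) : Prop :=
  ∀ x y z w : Fin n → ℝ,
    ip (R (wedgeVec x y)) (wedgeVec z w) + ip (R (wedgeVec y z)) (wedgeVec x w)
      + ip (R (wedgeVec z x)) (wedgeVec y w) = 0

/-- Algebraic curvature operators: self-adjoint endomorphisms of `⋀²ℝⁿ` satisfying the
first Bianchi identity.  `IsACO R` says `R ∈ S²_B(⋀²ℝⁿ)`. -/
def IsACO {n : ℕ} (R : Module.End ℝ (so n)) : Prop := IsSelfAdjointCO R ∧ SatBianchi R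

/-- The Ricci tensor of `R`, `Ric(R)_{ij} = Σ_k ⟨R(e_i ∧ e_k), e_j ∧ e_k⟩`. -/
def RicM {n : ℕ} (R : Module.End ℝ (so n)) : Matrix (Fin n) (Fin n) ℝ :=
  Matrix.of fun i j => ∑ k, ip (R (wedgeVec (stdVec i) (stdVec k))) (wedgeVec (stdVec j) (stdVec k))

/-- The scalar curvature `s(R) = tr Ric(R)`. -/
def scal {n : ℕ} (R : Module.End ℝ (so n)) : ℝ := (RicM R).trace

/-- `‖Ric(R)‖² = tr (Ric(R)²)`. -/
def ricNormSq {n : ℕ} (R : Module.End ℝ (so n)) : ℝ := (RicM R * RicM R).trace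

/-- The traceless Ricci tensor `Ric₀(R)`. -/
def Ric0M {n : ℕ} (R : Module.End ℝ (so n)) : Matrix (Fin n) (Fin n) ℝ :=
  RicM R - (scal R / n) • (1 : Matrix (Fin n) (Fin n) ℝ)

/-- `R` is Einstein if `Ric(R)` is a scalar multiple of the identity of `ℝⁿ`. -/
def IsEinstein {n : ℕ} (R : Module.End ℝ (so n)) : Prop :=
  ∃ c : ℝ, RicM R = c • (1 : Matrix (Fin n) (Fin n) ℝ)

lemma wedgeEnd_key {n : ℕ} (A B : Matrix (Fin n) (Fin n) ℝ) (M : so n) :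
    (A * M.1 * Bᵀ + B * M.1 * Aᵀ)ᵀ = -(A * M.1 * Bᵀ + B * M.1 * Aᵀ) := by
  have hM := so_skew M
  rw [Matrix.transpose_add, Matrix.transpose_mul, Matrix.transpose_mul,
    Matrix.transpose_mul, Matrix.transpose_mul, Matrix.transpose_transpose,
    Matrix.transpose_transpose, hM]
  simp only [Matrix.mul_neg, Matrix.neg_mul, Matrix.mul_assoc, neg_add]
  abel

/-- The wedge `A ∧ B` of two endomorphisms of `ℝⁿ`, as an endomorphism of `⋀²ℝⁿ ≅ so n`:
`(A ∧ B)(v ∧ w) = (1/2)(Av ∧ Bw + Bv ∧ Aw)`, i.e. `M ↦ (1/2)(A M Bᵀ + B M Aᵀ)`. -/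
def wedgeEnd {n : ℕ} (A B : Matrix (Fin n) (Fin n) ℝ) : Module.End ℝ (so n) where
  toFun M := ⟨(1 / 2 : ℝ) • (A * M.1 * Bᵀ + B * M.1 * Aᵀ), by
    rw [mem_so, Matrix.transpose_smul, wedgeEnd_key, smul_neg]⟩
  map_add' M N := by
    apply Subtype.ext
    simp [Matrix.mul_add, Matrix.add_mul, smul_add]
    abel
  map_smul' c M := by
    apply Subtype.ext
    simp [Matrix.mul_smul, Matrix.smul_mul, smul_smul, mul_comm]

/-- Inner product `⟨A, B⟩ = tr(A ∘ B)` on endomorphisms of `⋀²ℝⁿ` (the Frobenius inner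
product for self-adjoint operators). -/
def endIP {n : ℕ} (A B : Module.End ℝ (so n)) : ℝ := LinearMap.trace ℝ ↥(so n) (A * B)

/-- Norm of an endomorphism of `⋀²ℝⁿ` induced by `endIP`. -/
def endNorm {n : ℕ} (A : Module.End ℝ (so n)) : ℝ := Real.sqrt (endIP A A)

/-- Huisken's trilinear form `tri(A,B,C) = tr((AB + BA + 2 A#B) ∘ C) = 2⟨Q(A,B), C⟩`. -/
def tri {n : ℕ} (A B C : Module.End ℝ (so n)) : ℝ :=
  LinearMap.trace ℝ ↥(so n) ((A * B + B * A + (2 : ℝ) • sharp A B) * C)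

/-- The identity component `R_I = (s(R)/(n(n-1))) id ∧ id` of a curvature operator. -/
def compI {n : ℕ} (R : Module.End ℝ (so n)) : Module.End ℝ (so n) :=
  (scal R / ((n : ℝ) * ((n : ℝ) - 1))) • 1

/-- The traceless-Ricci component `R_{Ric₀} = (2/(n-2)) Ric₀(R) ∧ id`. -/
def compRic0 {n : ℕ} (R : Module.End ℝ (so n)) : Module.End ℝ (so n) :=
  (2 / ((n : ℝ) - 2)) • wedgeEnd (Ric0M R) 1

/-- The Weyl component `R_W = R - R_I - R_{Ric₀}`. -/
def compW {n : ℕ} (R : Module.End ℝ (so n)) : Module.End ℝ (so n) := R - compI R - compRic0 R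

/-- The derivative `DQ̃(R)` of the normalized vector field
`Q̃(R) = Q(R) - ‖Ric R‖² R` at `R`, applied to `A`:
`DQ̃(R)(A) = 2Q(R,A) - ‖Ric R‖² A - 2 tr(Ric R · Ric A) R`. -/
def DQt {n : ℕ} (R A : Module.End ℝ (so n)) : Module.End ℝ (so n) :=
  (2 : ℝ) • Qbil R A - ricNormSq R • A - (2 * (RicM R * RicM A).trace) • R

/-!
A curvature operator `S` acts on all `n × n` matrices by `(S̊ M)_{ij} = ∑_{p,q} M_{pq} S_{ipjq}`.
This action sends the identity to `Ric S`, and by the Bianchi identity it extends `S` from the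
skew-symmetric matrices. Because `ad X` is a derivation for the wedge product, all the brackets in
`S # (A ∧ id)` contract to values of `S̊`, and for symmetric `A` this yields
`Q(S, A ∧ id) = (1/2) (A ∧ Ric S + S̊A ∧ id)`.
When `Ric S = 0` only `(1/2) S̊A ∧ id` remains, where `S̊A` is symmetric with trace
`tr S̊A = ⟨A, Ric S⟩ = 0`. Both trilinear forms vanish since `B ∧ id` pairs with an operator only
through its Ricci tensor.
-/

section

variable {n : ℕ}

lemma omegaB_apply (p q i j : Fin n) :
    (omegaB (p, q)).1 i j =
      (if i = p then 1 else 0) * (if j = q then 1 else 0)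
        - (if i = q then 1 else 0) * (if j = p then (1 : ℝ) else 0) := by
  simp [omegaB, wedgeVec, stdVec, Pi.single_apply]

lemma coe_wedgeVec (x y : Fin n → ℝ) : (wedgeVec x y).1 = vecMulVec x y - vecMulVec y x := by
  ext i j
  simp [wedgeVec, vecMulVec_apply]

lemma wedgeVec_swap (x y : Fin n → ℝ) : wedgeVec y x = -wedgeVec x y := by
  apply Subtype.ext
  ext i j
  simp [wedgeVec]

lemma wedgeVec_self (x : Fin n → ℝ) : wedgeVec x x = 0 := by
  apply Subtype.ext
  ext i j
  simp [wedgeVec]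

lemma wedgeVec_eq_sum_omegaB (x y : Fin n → ℝ) :
    wedgeVec x y = ∑ p, ∑ q, (x p * y q) • omegaB (p, q) := by
  apply Subtype.ext
  ext i j
  simp [wedgeVec, Matrix.sum_apply, omegaB_apply, mul_sub, mul_comm]

lemma eq_half_smul_sum_omegaB (X : so n) :
    X = (1 / 2 : ℝ) • ∑ p, ∑ q, X.1 p q • omegaB (p, q) := by
  apply Subtype.ext
  ext i j
  have hskew : X.1 j i = -X.1 i j := so_skew' X i j
  simp [Matrix.sum_apply, omegaB_apply, mul_sub, hskew]
  ring

lemma coe_wedgeEnd_apply (A B : Matrix (Fin n) (Fin n) ℝ) (X : so n) :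
    (wedgeEnd A B X).1 = (1 / 2 : ℝ) • (A * X.1 * Bᵀ + B * X.1 * Aᵀ) := rfl

lemma wedgeEnd_wedgeVec (A B : Matrix (Fin n) (Fin n) ℝ) (x y : Fin n → ℝ) :
    wedgeEnd A B (wedgeVec x y)
      = (1 / 2 : ℝ) • (wedgeVec (A *ᵥ x) (B *ᵥ y) + wedgeVec (B *ᵥ x) (A *ᵥ y)) := by
  apply Subtype.ext
  simp only [wedgeEnd, LinearMap.coe_mk, AddHom.coe_mk, Submodule.coe_smul, Submodule.coe_add,
    coe_wedgeVec, Matrix.mul_sub, Matrix.sub_mul, Matrix.mul_vecMulVec, Matrix.vecMulVec_mul,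
    Matrix.vecMul_transpose]
  module

lemma ip_omegaB (X : so n) (p q : Fin n) : ip X (omegaB (p, q)) = X.1 p q := by
  have hskew : X.1 q p = -X.1 p q := so_skew' X p q
  have htrace : (X.1 * (omegaB (p, q)).1).trace = X.1 q p - X.1 p q := by
    simp [Matrix.trace, Matrix.mul_apply, omegaB_apply, mul_sub]
  rw [ip, htrace, hskew]
  ring

lemma ip_comm (X Y : so n) : ip X Y = ip Y X := by
  rw [ip, ip, Matrix.trace_mul_comm]

lemma ip_neg_left (X Y : so n) : ip (-X) Y = -ip X Y := by
  rw [ip_comm, ip_comm X]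
  exact map_neg (ipL Y) X

lemma ip_neg_right (X Y : so n) : ip X (-Y) = -ip X Y := map_neg (ipL X) Y

lemma ip_zero_right (X : so n) : ip X 0 = 0 := map_zero (ipL X)

lemma sum_pairs_omegaB {M : Type*} [AddCommGroup M] [Module ℝ M] (f : so n → M)
    (hzero : f 0 = 0) (hneg : ∀ X, f (-X) = f X) :
    ∑ p ∈ pairs n, f (omegaB p) = (1 / 2 : ℝ) • ∑ p, ∑ q, f (omegaB (p, q)) := by
  have hlower : ∑ p : Fin n × Fin n with ¬p.1 < p.2, f (omegaB p)
      = ∑ p ∈ pairs n, f (omegaB p) := by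
    have hdiag : ∀ p : Fin n × Fin n, ¬p.1 < p.2 → f (omegaB p) ≠ 0 → p.2 < p.1 := by
      intro p hle hne
      refine lt_of_le_of_ne (not_lt.mp hle) fun h => hne ?_
      rw [omegaB, h, wedgeVec_self, hzero]
    rw [← Finset.sum_filter_of_ne (p := fun p => p.2 < p.1)
      fun p hp => hdiag p (Finset.mem_filter.mp hp).2, Finset.filter_filter]
    refine Finset.sum_nbij' Prod.swap Prod.swap ?_ ?_ ?_ ?_ ?_
    · simp +contextual [pairs]
    · simp +contextual [pairs, le_of_lt]
    · simp
    · simp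
    · intro p _
      rw [omegaB, wedgeVec_swap, hneg]
      rfl
  have hsplit := Finset.sum_filter_add_sum_filter_not Finset.univ
    (fun p : Fin n × Fin n => p.1 < p.2) (fun p => f (omegaB p))
  rw [hlower, Fintype.sum_prod_type] at hsplit
  rw [← hsplit, pairs]
  module

lemma sum_pairs_ip_smul_omegaB (X : so n) :
    ∑ p ∈ pairs n, ip X (omegaB p) • omegaB p = X := by
  rw [sum_pairs_omegaB (fun Y => ip X Y • Y) (smul_zero _) fun Y => by
    rw [ip_neg_right, neg_smul_neg]]
  simp only [ip_omegaB]
  exact (eq_half_smul_sum_omegaB X).symm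

/-- The bracket `brkt` of `so n` as a bilinear map. -/
def brktBilin (n : ℕ) : so n →ₗ[ℝ] so n →ₗ[ℝ] so n :=
  LinearMap.mk₂ ℝ brkt
    (fun X Y Z => Subtype.ext <| by simp [brkt, Matrix.add_mul, Matrix.mul_add]; abel)
    (fun c X Y => Subtype.ext <| by simp [brkt, smul_sub])
    (fun X Y Z => Subtype.ext <| by simp [brkt, Matrix.add_mul, Matrix.mul_add]; abel)
    (fun c X Y => Subtype.ext <| by simp [brkt, smul_sub])

lemma brktBilin_apply (X Y : so n) : brktBilin n X Y = brkt X Y := rfl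

lemma brkt_swap (X Y : so n) : brkt X Y = -brkt Y X := by
  apply Subtype.ext
  simp [brkt]

lemma ip_brkt_left (X Y Z : so n) : ip (brkt X Y) Z = ip X (brkt Y Z) := by
  simp only [ip, brkt, Matrix.sub_mul, Matrix.mul_sub, Matrix.trace_sub, Matrix.mul_assoc]
  rw [Matrix.trace_mul_comm Y.1, Matrix.mul_assoc]

lemma brkt_wedgeVec (X : so n) (x y : Fin n → ℝ) :
    brkt X (wedgeVec x y) = wedgeVec (X.1 *ᵥ x) y + wedgeVec x (X.1 *ᵥ y) := by
  have hX : ∀ v, v ᵥ* X.1 = -(X.1 *ᵥ v) := by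
    intro v
    rw [← Matrix.mulVec_transpose, so_skew, Matrix.neg_mulVec]
  apply Subtype.ext
  simp only [brkt, Submodule.coe_add, coe_wedgeVec, Matrix.mul_sub, Matrix.sub_mul,
    Matrix.mul_vecMulVec, Matrix.vecMulVec_mul, hX, Matrix.vecMulVec_neg]
  abel

lemma sharp_comm (A B : Module.End ℝ (so n)) : sharp A B = sharp B A := by
  rw [sharp, sharp, Finset.sum_comm]
  congr 1
  refine Finset.sum_congr rfl fun p _ => Finset.sum_congr rfl fun q _ => ?_
  ext1 X
  change ip (brkt _ _) X • brkt _ _ = ip (brkt _ _) X • brkt _ _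
  rw [brkt_swap (A _), brkt_swap (omegaB q), ip_neg_left, neg_smul_neg]

lemma sharp_apply_of_isSelfAdjoint {S : Module.End ℝ (so n)} (hS : IsSelfAdjointCO S)
    (R : Module.End ℝ (so n)) (X : so n) :
    sharp S R X
      = (1 / 4 : ℝ) • ∑ r, ∑ s, brkt (S (brkt (R (omegaB (r, s))) X)) (omegaB (r, s)) := by
  have hinner : ∀ Y : so n,
      ∑ p ∈ pairs n, ip (brkt (S (omegaB p)) (R Y)) X • brkt (omegaB p) Y
        = brkt (S (brkt (R Y) X)) Y := by
    intro Y
    conv_rhs => rw [← sum_pairs_ip_smul_omegaB (S (brkt (R Y) X)), ← brktBilin_apply]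
    simp only [map_sum, map_smul, LinearMap.sum_apply, LinearMap.smul_apply, brktBilin_apply]
    refine Finset.sum_congr rfl fun p _ => ?_
    rw [ip_brkt_left, hS, ip_comm, hS, ip_comm]
  have hsum : sharp S R X
      = (1 / 2 : ℝ) • ∑ q ∈ pairs n, brkt (S (brkt (R (omegaB q)) X)) (omegaB q) := by
    simp only [← hinner]
    rw [sharp, LinearMap.smul_apply, Finset.sum_comm, LinearMap.sum_apply]
    simp only [LinearMap.sum_apply]
    rfl
  rw [hsum, sum_pairs_omegaB (fun Y => brkt (S (brkt (R Y) X)) Y), smul_smul]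
  · norm_num
  · simp [← brktBilin_apply]
  · simp [← brktBilin_apply]

lemma Qbil_comm (A B : Module.End ℝ (so n)) : Qbil A B = Qbil B A := by
  rw [Qbil, Qbil, sharp_comm, add_comm (A * B)]

lemma RicM_apply (R : Module.End ℝ (so n)) (i j : Fin n) :
    RicM R i j = ∑ k, (R (omegaB (i, k))).1 j k := by
  simp only [← ip_omegaB]
  rfl

lemma RicM_one (n : ℕ) :
    RicM (1 : Module.End ℝ (so n)) = ((n : ℝ) - 1) • (1 : Matrix (Fin n) (Fin n) ℝ) := by
  ext i j
  rcases eq_or_ne i j with rfl | hij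
  · simp [RicM_apply, omegaB_apply]
  · simp [RicM_apply, omegaB_apply, hij, hij.symm]

lemma trace_eq_half_scal (E : Module.End ℝ (so n)) :
    LinearMap.trace ℝ (so n) E = (1 / 2 : ℝ) * scal E := by
  have hE : E = ∑ p ∈ pairs n, (ipL (omegaB p)).smulRight (E (omegaB p)) := by
    ext1 X
    conv_lhs => rw [← sum_pairs_ip_smul_omegaB X, map_sum]
    rw [LinearMap.sum_apply]
    refine Finset.sum_congr rfl fun p _ => ?_
    rw [map_smul, ip_comm]
    rfl
  calc LinearMap.trace ℝ (so n) E
      = ∑ p ∈ pairs n, ip (E (omegaB p)) (omegaB p) := by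
        conv_lhs => rw [hE, map_sum]
        refine Finset.sum_congr rfl fun p _ => ?_
        rw [LinearMap.trace_smulRight, ip_comm]
        rfl
    _ = (1 / 2 : ℝ) * scal E :=
        sum_pairs_omegaB (fun X => ip (E X) X) (ip_zero_right _) fun X => by
          rw [map_neg, ip_neg_left, ip_neg_right, neg_neg]

lemma endIP_wedgeEnd_one (B : Matrix (Fin n) (Fin n) ℝ) (W : Module.End ℝ (so n)) :
    endIP (wedgeEnd B 1) W = (1 / 2 : ℝ) * (Bᵀ * RicM W).trace := by
  have hleft : ∑ i, ∑ k, (B * (W (omegaB (i, k))).1) i k = (Bᵀ * RicM W).trace := by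
    simp only [Matrix.trace, Matrix.diag, Matrix.mul_apply, Matrix.transpose_apply, RicM_apply,
      Finset.mul_sum]
    rw [Finset.sum_comm_cycle]
  have hright : ∑ i, ∑ k, ((W (omegaB (i, k))).1 * Bᵀ) i k
      = ∑ i, ∑ k, (B * (W (omegaB (i, k))).1) i k := by
    rw [Finset.sum_comm]
    refine Finset.sum_congr rfl fun k _ => Finset.sum_congr rfl fun i _ => ?_
    have hskew : (W (omegaB (i, k))).1 = ((W (omegaB (k, i))).1)ᵀ := by
      rw [omegaB, wedgeVec_swap, map_neg, so_skew]
      rfl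
    rw [hskew, ← Matrix.transpose_mul, Matrix.transpose_apply]
  have hentry : ∀ i k, ip ((wedgeEnd B 1 * W) (omegaB (i, k))) (omegaB (i, k))
      = (1 / 2 : ℝ) * ((B * (W (omegaB (i, k))).1) i k + ((W (omegaB (i, k))).1 * Bᵀ) i k) := by
    intro i k
    simp [ip_omegaB, coe_wedgeEnd_apply]
  have hscal : scal (wedgeEnd B 1 * W) = (Bᵀ * RicM W).trace := by
    rw [scal, Matrix.trace]
    simp only [Matrix.diag, RicM_apply, ← ip_omegaB, hentry, ← Finset.mul_sum,
      Finset.sum_add_distrib]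
    rw [hright, hleft]
    ring
  rw [endIP, trace_eq_half_scal, hscal]

lemma tri_eq_two_mul_endIP_Qbil (A B C : Module.End ℝ (so n)) :
    tri A B C = 2 * endIP (Qbil A B) C := by
  have hQ : A * B + B * A + (2 : ℝ) • sharp A B = (2 : ℝ) • Qbil A B := by
    rw [Qbil]
    module
  rw [tri, hQ, smul_mul_assoc, map_smul, smul_eq_mul, endIP]

/-- The component `S_{ijkl} = ⟨S(e_i ∧ e_j), e_k ∧ e_l⟩` of the `(0,4)`-tensor of `S`. -/
def curvComp (S : Module.End ℝ (so n)) (i j k l : Fin n) : ℝ :=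
  ip (S (omegaB (i, j))) (omegaB (k, l))

lemma curvComp_swap_left (S : Module.End ℝ (so n)) (i j k l : Fin n) :
    curvComp S j i k l = -curvComp S i j k l := by
  rw [curvComp, omegaB, wedgeVec_swap, map_neg, ip_neg_left]
  rfl

lemma curvComp_swap_right (S : Module.End ℝ (so n)) (i j k l : Fin n) :
    curvComp S i j l k = -curvComp S i j k l :=
  (congrArg (ip _) (wedgeVec_swap _ _)).trans (ip_neg_right _ _)

lemma curvComp_pair_symm {S : Module.End ℝ (so n)} (hS : IsSelfAdjointCO S)
    (i j k l : Fin n) : curvComp S i j k l = curvComp S k l i j := by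
  rw [curvComp, hS, ip_comm, curvComp]

lemma apply_wedgeVec_apply (S : Module.End ℝ (so n)) (x y : Fin n → ℝ) (k l : Fin n) :
    (S (wedgeVec x y)).1 k l = ∑ p, ∑ q, x p * y q * curvComp S p q k l := by
  simp [wedgeVec_eq_sum_omegaB x y, Matrix.sum_apply, curvComp, ip_omegaB]

lemma apply_apply_eq_sum_curvComp (S : Module.End ℝ (so n)) (X : so n) (k l : Fin n) :
    (S X).1 k l = (1 / 2 : ℝ) * ∑ p, ∑ q, X.1 p q * curvComp S p q k l := by
  conv_lhs => rw [eq_half_smul_sum_omegaB X]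
  simp [Matrix.sum_apply, curvComp, ip_omegaB]

/-- The action `M ↦ (∑_{p,q} M_{pq} S_{ipjq})_{ij}` of a curvature operator on `n × n` matrices,
whose restriction to symmetric matrices is the curvature operator of the second kind. -/
def secondKind (S : Module.End ℝ (so n)) (M : Matrix (Fin n) (Fin n) ℝ) :
    Matrix (Fin n) (Fin n) ℝ :=
  Matrix.of fun i j => ∑ p, ∑ q, M p q * curvComp S i p j q

lemma secondKind_one (S : Module.End ℝ (so n)) : secondKind S 1 = RicM S := by
  ext i j
  simp [secondKind, Matrix.one_apply, RicM_apply, curvComp, ip_omegaB]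

lemma secondKind_sub (S : Module.End ℝ (so n)) (M N : Matrix (Fin n) (Fin n) ℝ) :
    secondKind S (M - N) = secondKind S M - secondKind S N := by
  ext i j
  simp [secondKind, sub_mul]

lemma transpose_secondKind {S : Module.End ℝ (so n)} (hS : IsSelfAdjointCO S)
    (M : Matrix (Fin n) (Fin n) ℝ) : (secondKind S M)ᵀ = secondKind S Mᵀ := by
  ext i j
  simp only [secondKind, Matrix.transpose_apply, Matrix.of_apply]
  rw [Finset.sum_comm]
  simp only [curvComp_pair_symm hS j]

lemma transpose_RicM {S : Module.End ℝ (so n)} (hS : IsSelfAdjointCO S) :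
    (RicM S)ᵀ = RicM S := by
  rw [← secondKind_one, transpose_secondKind hS, Matrix.transpose_one]

lemma trace_secondKind (S : Module.End ℝ (so n)) (M : Matrix (Fin n) (Fin n) ℝ) :
    (secondKind S M).trace = (Mᵀ * RicM S).trace := by
  have hRic : ∀ p q, RicM S p q = ∑ i, curvComp S i p i q := by
    intro p q
    rw [RicM, Matrix.of_apply]
    refine Finset.sum_congr rfl fun i _ => ?_
    rw [curvComp_swap_left, curvComp_swap_right, neg_neg]
    rfl
  simp only [Matrix.trace, Matrix.diag, secondKind, Matrix.of_apply, Matrix.mul_apply,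
    Matrix.transpose_apply, hRic, Finset.mul_sum]
  rw [Finset.sum_comm_cycle]
  exact Finset.sum_congr rfl fun q _ => Finset.sum_comm

lemma secondKind_coe {S : Module.End ℝ (so n)} (hS : IsACO S) (X : so n) :
    secondKind S X.1 = (S X).1 := by
  have hbianchi : ∀ i j p q,
      curvComp S p q i j = curvComp S i p j q - curvComp S i q j p := by
    intro i j p q
    have hcyclic : curvComp S i p j q + curvComp S p j i q + curvComp S j i p q = 0 :=
      hS.2 _ _ _ _
    have h₁ := curvComp_pair_symm hS.1 p j i q
    have h₂ := curvComp_swap_right S i q j p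
    have h₃ := curvComp_swap_left S i j p q
    have h₄ := curvComp_pair_symm hS.1 p q i j
    linarith
  ext i j
  have hswap : ∑ p, ∑ q, X.1 p q * curvComp S i q j p = -secondKind S X.1 i j := by
    rw [Finset.sum_comm]
    simp only [secondKind, Matrix.of_apply, ← Finset.sum_neg_distrib]
    refine Finset.sum_congr rfl fun p _ => Finset.sum_congr rfl fun q _ => ?_
    rw [so_skew' X p q, neg_mul]
  have hdouble : ∑ p, ∑ q, X.1 p q * curvComp S p q i j = 2 * secondKind S X.1 i j := by
    simp only [hbianchi i j, mul_sub, Finset.sum_sub_distrib, hswap]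
    rw [sub_neg_eq_add, two_mul, secondKind, Matrix.of_apply]
  rw [apply_apply_eq_sum_curvComp, hdouble]
  ring

lemma sum_apply_wedgeVec_col (S : Module.End ℝ (so n)) (x : Fin n → ℝ)
    (M : Matrix (Fin n) (Fin n) ℝ) (j : Fin n) :
    ∑ s, (S (wedgeVec x (M.col s))).1 j s = (x ᵥ* secondKind S M) j := by
  simp only [apply_wedgeVec_apply, Matrix.vecMul, dotProduct, secondKind, Matrix.of_apply,
    Matrix.col_apply, Finset.mul_sum, mul_assoc]
  rw [Finset.sum_comm]
  exact Finset.sum_congr rfl fun p _ => Finset.sum_comm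

lemma sum_apply_col_wedgeVec (S : Module.End ℝ (so n)) (M : Matrix (Fin n) (Fin n) ℝ)
    (y : Fin n → ℝ) (j : Fin n) :
    ∑ r, (S (wedgeVec (M.col r) y)).1 j r = -(y ᵥ* secondKind S M) j := by
  rw [← sum_apply_wedgeVec_col, ← Finset.sum_neg_distrib]
  refine Finset.sum_congr rfl fun r _ => ?_
  rw [wedgeVec_swap, map_neg, Submodule.coe_neg, Matrix.neg_apply]

/-- The sum `∑_{r,s} [S(P e_r ∧ T e_s), e_r ∧ e_s]`, through which `S # (A ∧ B)` is evaluated. -/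
def bracketContraction (S : Module.End ℝ (so n)) (P T : Matrix (Fin n) (Fin n) ℝ) : so n :=
  ∑ r, ∑ s, brkt (S (wedgeVec (P.col r) (T.col s))) (omegaB (r, s))

lemma coe_bracketContraction (S : Module.End ℝ (so n)) (P T : Matrix (Fin n) (Fin n) ℝ) :
    (bracketContraction S P T).1
      = (Tᵀ * secondKind S P - (secondKind S P)ᵀ * T)
        + (Pᵀ * secondKind S T - (secondKind S T)ᵀ * P) := by
  have hbrkt : ∀ (Y : so n) (r s i j : Fin n), (brkt Y (omegaB (r, s))).1 i j
      = Y.1 i r * (if j = s then 1 else 0) - Y.1 i s * (if j = r then 1 else 0)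
        + (Y.1 j s * (if i = r then 1 else 0) - Y.1 j r * (if i = s then 1 else 0)) := by
    intro Y r s i j
    simp [brkt, Matrix.mul_apply, omegaB_apply, mul_sub, sub_mul, so_skew' Y j]
    ring
  have hcol : ∀ (M N : Matrix (Fin n) (Fin n) ℝ) (i j : Fin n),
      (M.col i ᵥ* N) j = (Mᵀ * N) i j := fun _ _ _ _ => rfl
  have hcol' : ∀ (M N : Matrix (Fin n) (Fin n) ℝ) (i j : Fin n),
      (M.col j ᵥ* N) i = (Nᵀ * M) i j := fun M N i j => by
    rw [hcol, ← Matrix.transpose_apply (Mᵀ * N), Matrix.transpose_mul, Matrix.transpose_transpose]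
  ext i j
  calc (bracketContraction S P T).1 i j
      = ∑ r, (S (wedgeVec (P.col r) (T.col j))).1 i r
        - ∑ s, (S (wedgeVec (P.col j) (T.col s))).1 i s
        + (∑ s, (S (wedgeVec (P.col i) (T.col s))).1 j s
          - ∑ r, (S (wedgeVec (P.col r) (T.col i))).1 j r) := by
        simp [bracketContraction, Matrix.sum_apply, hbrkt, Finset.sum_add_distrib]
    _ = _ := by
        rw [sum_apply_col_wedgeVec, sum_apply_col_wedgeVec, sum_apply_wedgeVec_col,
          sum_apply_wedgeVec_col, hcol', hcol', hcol, hcol]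
        simp only [Matrix.add_apply, Matrix.sub_apply]
        ring

lemma bracketContraction_comm (S : Module.End ℝ (so n)) (P T : Matrix (Fin n) (Fin n) ℝ) :
    bracketContraction S P T = bracketContraction S T P :=
  Subtype.ext <| by rw [coe_bracketContraction, coe_bracketContraction, add_comm]

lemma sharp_wedgeEnd_apply {S : Module.End ℝ (so n)} (hS : IsSelfAdjointCO S)
    (A B : Matrix (Fin n) (Fin n) ℝ) (X : so n) :
    sharp S (wedgeEnd A B) X
      = -(1 / 4 : ℝ) • (bracketContraction S (X.1 * A) B + bracketContraction S A (X.1 * B)) := by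
  have hbrkt : ∀ r s, brkt (wedgeEnd A B (omegaB (r, s))) X
      = -(1 / 2 : ℝ) • (wedgeVec ((X.1 * A).col r) (B.col s) + wedgeVec (A.col r) ((X.1 * B).col s)
        + wedgeVec ((X.1 * B).col r) (A.col s) + wedgeVec (B.col r) ((X.1 * A).col s)) := by
    intro r s
    have hcol : ∀ M : Matrix (Fin n) (Fin n) ℝ, ∀ i, X.1 *ᵥ M.col i = (X.1 * M).col i :=
      fun _ _ => rfl
    rw [brkt_swap, omegaB, wedgeEnd_wedgeVec, ← brktBilin_apply, map_smul, map_add,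
      brktBilin_apply, brktBilin_apply, brkt_wedgeVec, brkt_wedgeVec]
    simp only [stdVec, Matrix.mulVec_single_one, hcol]
    module
  have hsum : ∑ r, ∑ s, brkt (S (brkt (wedgeEnd A B (omegaB (r, s))) X)) (omegaB (r, s))
      = -(1 / 2 : ℝ) • (bracketContraction S (X.1 * A) B + bracketContraction S A (X.1 * B)
        + bracketContraction S (X.1 * B) A + bracketContraction S B (X.1 * A)) := by
    simp only [hbrkt, bracketContraction, ← brktBilin_apply, map_smul, map_add,
      LinearMap.smul_apply, LinearMap.add_apply, Finset.smul_sum, Finset.sum_add_distrib, smul_add]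
  rw [sharp_apply_of_isSelfAdjoint hS, hsum, bracketContraction_comm S (X.1 * B),
    bracketContraction_comm S B]
  module

lemma bracketContraction_coe_mul_one {A : Matrix (Fin n) (Fin n) ℝ} (hA : Aᵀ = A)
    {S : Module.End ℝ (so n)} (hS : IsACO S) (X : so n) :
    bracketContraction S (X.1 * A) 1
      = (2 : ℝ) • (S (wedgeEnd A 1 X) - wedgeEnd A (RicM S) X) := by
  have hskew : X.1 * A - (X.1 * A)ᵀ = ((2 : ℝ) • wedgeEnd A 1 X).1 := by
    rw [Matrix.transpose_mul, so_skew, hA, Submodule.coe_smul, coe_wedgeEnd_apply, hA,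
      Matrix.transpose_one, Matrix.mul_one, Matrix.one_mul, Matrix.mul_neg]
    module
  have hsecond : secondKind S (X.1 * A) - (secondKind S (X.1 * A))ᵀ
      = (2 : ℝ) • (S (wedgeEnd A 1 X)).1 := by
    rw [transpose_secondKind hS.1, ← secondKind_sub, hskew, secondKind_coe hS, map_smul,
      Submodule.coe_smul]
  apply Subtype.ext
  rw [coe_bracketContraction, secondKind_one, Matrix.transpose_one, Matrix.one_mul,
    Matrix.mul_one, hsecond, Submodule.coe_smul, Submodule.coe_sub, coe_wedgeEnd_apply,
    transpose_RicM hS.1, Matrix.transpose_mul, so_skew, hA]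
  simp only [Matrix.mul_assoc, Matrix.mul_neg, Matrix.neg_mul]
  module

lemma bracketContraction_coe_right {A : Matrix (Fin n) (Fin n) ℝ} (hA : Aᵀ = A)
    {S : Module.End ℝ (so n)} (hS : IsACO S) (X : so n) :
    bracketContraction S A X.1
      = (2 : ℝ) • (wedgeEnd A 1 (S X) - wedgeEnd (secondKind S A) 1 X) := by
  have hsymm : (secondKind S A)ᵀ = secondKind S A := by rw [transpose_secondKind hS.1, hA]
  apply Subtype.ext
  rw [coe_bracketContraction, secondKind_coe hS, Submodule.coe_smul, Submodule.coe_sub,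
    coe_wedgeEnd_apply, coe_wedgeEnd_apply, hsymm, hA, so_skew X, so_skew (S X)]
  simp only [Matrix.transpose_one, Matrix.mul_one, Matrix.one_mul, Matrix.neg_mul]
  module

theorem Qbil_wedgeEnd_one {A : Matrix (Fin n) (Fin n) ℝ} (hA : Aᵀ = A)
    {S : Module.End ℝ (so n)} (hS : IsACO S) :
    Qbil S (wedgeEnd A 1)
      = (1 / 2 : ℝ) • (wedgeEnd A (RicM S) + wedgeEnd (secondKind S A) 1) := by
  ext1 X
  simp only [Qbil, LinearMap.add_apply, LinearMap.smul_apply, Module.End.mul_apply]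
  rw [sharp_wedgeEnd_apply hS.1, Matrix.mul_one, bracketContraction_coe_mul_one hA hS,
    bracketContraction_coe_right hA hS]
  module

theorem Qbil_wedgeEnd_one_of_RicM_eq_zero {A : Matrix (Fin n) (Fin n) ℝ} (hA : Aᵀ = A)
    {S : Module.End ℝ (so n)} (hS : IsACO S) (hRic : RicM S = 0) :
    Qbil S (wedgeEnd A 1) = wedgeEnd ((1 / 2 : ℝ) • secondKind S A) 1 := by
  rw [Qbil_wedgeEnd_one hA hS, hRic]
  ext1 X
  apply Subtype.ext
  simp [coe_wedgeEnd_apply]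

end

theorem stmt14_general (n : ℕ) (A : Matrix (Fin n) (Fin n) ℝ) (hAsym : Aᵀ = A)
    (R : Module.End ℝ (so n)) (hR : R = wedgeEnd A 1) (S W : Module.End ℝ (so n))
    (hS : IsACO S) (hSW : RicM S = 0) (hWW : RicM W = 0) :
    tri R S W = 0 ∧ tri S R (1 : Module.End ℝ (so n)) = 0 ∧
    ∃ B : Matrix (Fin n) (Fin n) ℝ, Bᵀ = B ∧ B.trace = 0 ∧ Qbil S R = wedgeEnd B 1 := by
  obtain ⟨B, hB⟩ : ∃ B, B = (1 / 2 : ℝ) • secondKind S A := ⟨_, rfl⟩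
  have hQ : Qbil S R = wedgeEnd B 1 := by
    rw [hR, hB, Qbil_wedgeEnd_one_of_RicM_eq_zero hAsym hS hSW]
  have hBsymm : Bᵀ = B := by
    rw [hB, Matrix.transpose_smul, transpose_secondKind hS.1, hAsym]
  have hBtrace : B.trace = 0 := by
    rw [hB, Matrix.trace_smul, trace_secondKind, hSW, Matrix.mul_zero, Matrix.trace_zero,
      smul_zero]
  refine ⟨?_, ?_, B, hBsymm, hBtrace, hQ⟩
  · rw [tri_eq_two_mul_endIP_Qbil, Qbil_comm, hQ, endIP_wedgeEnd_one, hWW]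
    simp
  · rw [tri_eq_two_mul_endIP_Qbil, hQ, endIP_wedgeEnd_one, RicM_one]
    simp [hBtrace]

/-- For `R ∈ ⟨Ric₀⟩` (i.e. `R = A ∧ id` with `A` traceless
self-adjoint) and Weyl curvature operators `S, W ∈ ⟨W⟩`, one has
`tri(R,S,W) = 0 = tri(S,R,𝐈)` and `Q(S,R) ∈ ⟨Ric₀⟩`. -/
theorem stmt14 (n : ℕ) (A : Matrix (Fin n) (Fin n) ℝ)
    (hAsym : Aᵀ = A) (hAtr : A.trace = 0)
    (R : Module.End ℝ (so n)) (hR : R = wedgeEnd A 1)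
    (S W : Module.End ℝ (so n))
    (hS : IsACO S) (hSW : RicM S = 0)
    (hW : IsACO W) (hWW : RicM W = 0) :
    tri R S W = 0 ∧ tri S R (1 : Module.End ℝ (so n)) = 0 ∧
    ∃ B : Matrix (Fin n) (Fin n) ℝ, Bᵀ = B ∧ B.trace = 0 ∧ Qbil S R = wedgeEnd B 1 := by
  exact stmt14_general n A hAsym R hR S W hS hSW hWW

end
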